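/- arXiv:2505.20465 — 3 statements merged into one kernel-verified Lean document; each statement's English description precedes it below -/
import Mathlib

section
/- Let X = {X_t, t ≥ 0} be an ℝ^d-valued stochastic process on a probability space (Ω, F, P), fix T > 0, and define the progressive increment process X^T by X^T_t = X_t − X_{⌊t/T⌋T} for t ≥ 0. If X is strongly mixing with coefficient α : [0,∞) → [0,∞) — i.e. for all t, s ≥ 0, all A ∈ σ(X_u : 0 ≤ u ≤ t) and all B ∈ σ(X_u : u ≥ t+s), |P(A ∩ B) − P(A)P(B)| ≤ α(s) — then X^T is strongly mixing with coefficient α'(s) ≤ α(s − 2T) for s ≥ 2T: for all t ≥ 0, all s ≥ 2T, all A ∈ σ(X^T_u : 0 ≤ u ≤ t) and all B ∈ σ(X^T_u : u ≥ t+s), one has |P(A ∩ B) − P(A)P(B)| ≤ α(s − 2T). -/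
open MeasureTheory

/-! The increment `X_u - X_{⌊u/T⌋T}` is a measurable function of two values of `X`, at the times `u`
and `⌊u/T⌋T ∈ (u - T, u]`. Rounding down to the grid `Tℤ` keeps `[0, t]` inside itself and moves
`[t + s, ∞)` down by less than `T`, so the past of `X^T` is contained in the past of `X` and its
future in a future of `X` starting at most `T` earlier. Events of `X^T` with gap `s` are thus events
of `X` with any gap `r ≤ s - T`; since `α` need not be monotone, `r = s - 2T` is taken directly. -/

/-- The σ-algebra `σ(X_u : u ∈ S)` of the process `X` observed at the times in `S`. -/
abbrev observedSigmaAlgebra {Ω ι E : Type*} [MeasurableSpace E] (X : ι → Ω → E) (S : Set ι) :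
    MeasurableSpace Ω :=
  ⨆ u ∈ S, MeasurableSpace.comap (X u) inferInstance

/-- The progressive increment process `X^T_t = X_t - X_{⌊t/T⌋T}`. The time index is all of `ℝ`;
only times `t ≥ 0` matter for strong mixing. -/
noncomputable def progressiveIncrement {Ω E : Type*} [Sub E] (T : ℝ) (X : ℝ → Ω → E) : ℝ → Ω → E :=
  fun t ω => X t ω - X (⌊t / T⌋ * T) ω

/-- The number `c` bounds Rosenblatt's strong mixing coefficient `α(m₁, m₂)`, the supremum of
`|P(A ∩ B) - P(A)P(B)|` over `A ∈ m₁` and `B ∈ m₂`. -/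
def IsStrongMixingBound {Ω : Type*} (m₁ m₂ : MeasurableSpace Ω) {_ : MeasurableSpace Ω}
    (P : Measure Ω) (c : ℝ) : Prop :=
  ∀ A B : Set Ω, MeasurableSet[m₁] A → MeasurableSet[m₂] B →
    |P.real (A ∩ B) - P.real A * P.real B| ≤ c

theorem IsStrongMixingBound.mono {Ω : Type*} {m₁ m₁' m₂ m₂' : MeasurableSpace Ω}
    {_ : MeasurableSpace Ω} {P : Measure Ω} {c : ℝ} (h : IsStrongMixingBound m₁ m₂ P c)
    (h₁ : m₁' ≤ m₁) (h₂ : m₂' ≤ m₂) : IsStrongMixingBound m₁' m₂' P c :=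
  fun A B hA hB => h A B (h₁ A hA) (h₂ B hB)

theorem observedSigmaAlgebra_le_iff {Ω ι E : Type*} [MeasurableSpace E] {X : ι → Ω → E}
    {S : Set ι} {m : MeasurableSpace Ω} :
    observedSigmaAlgebra X S ≤ m ↔ ∀ u ∈ S, Measurable[m] (X u) := by
  simp only [observedSigmaAlgebra, iSup₂_le_iff, measurable_iff_comap_le]

theorem measurable_observedSigmaAlgebra {Ω ι E : Type*} [MeasurableSpace E] (X : ι → Ω → E)
    {S : Set ι} {u : ι} (hu : u ∈ S) : Measurable[observedSigmaAlgebra X S] (X u) :=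
  observedSigmaAlgebra_le_iff.1 le_rfl u hu

section Grid

variable {T t u : ℝ}

theorem floor_div_mul_mem_Icc (hT : 0 < T) (hu : u ∈ Set.Icc 0 t) :
    ⌊u / T⌋ * T ∈ Set.Icc 0 t := by
  have floor_nonneg : (0 : ℝ) ≤ ⌊u / T⌋ :=
    Int.cast_nonneg (Int.floor_nonneg.2 (div_nonneg hu.1 hT.le))
  have floor_le : ⌊u / T⌋ * T ≤ u := sub_nonneg.1 (Int.sub_floor_div_mul_nonneg u hT)
  exact ⟨mul_nonneg floor_nonneg hT.le, floor_le.trans hu.2⟩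

theorem floor_div_mul_mem_Ici_sub (hT : 0 < T) (hu : u ∈ Set.Ici t) :
    ⌊u / T⌋ * T ∈ Set.Ici (t - T) := by
  have sub_floor_lt : u - ⌊u / T⌋ * T < T := Int.sub_floor_div_mul_lt u hT
  rw [Set.mem_Ici] at hu ⊢
  linarith

end Grid

section ProgressiveIncrement

variable {Ω E : Type*} [MeasurableSpace E] [Sub E] [MeasurableSub₂ E] {T : ℝ} (X : ℝ → Ω → E)

theorem observedSigmaAlgebra_progressiveIncrement_le {S S' : Set ℝ} (hS : S ⊆ S')
    (hgrid : ∀ u ∈ S, ⌊u / T⌋ * T ∈ S') :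
    observedSigmaAlgebra (progressiveIncrement T X) S ≤ observedSigmaAlgebra X S' :=
  observedSigmaAlgebra_le_iff.2 fun u hu =>
    (measurable_observedSigmaAlgebra X (hS hu)).sub
      (measurable_observedSigmaAlgebra X (hgrid u hu))

theorem observedSigmaAlgebra_progressiveIncrement_Icc_le (hT : 0 < T) (t : ℝ) :
    observedSigmaAlgebra (progressiveIncrement T X) (Set.Icc 0 t) ≤
      observedSigmaAlgebra X (Set.Icc 0 t) :=
  observedSigmaAlgebra_progressiveIncrement_le X subset_rfl fun _ => floor_div_mul_mem_Icc hT

theorem observedSigmaAlgebra_progressiveIncrement_Ici_le (hT : 0 < T) {t t' : ℝ}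
    (htt' : t' + T ≤ t) :
    observedSigmaAlgebra (progressiveIncrement T X) (Set.Ici t) ≤
      observedSigmaAlgebra X (Set.Ici t') :=
  observedSigmaAlgebra_progressiveIncrement_le X (Set.Ici_subset_Ici.2 (by linarith))
    fun _ hu => (le_sub_iff_add_le.2 htt').trans (floor_div_mul_mem_Ici_sub hT hu)

theorem strong_mixing_implies_progressive_increments_strong_mixing_general
    [MeasurableSpace Ω] {P : Measure Ω} (hT : 0 < T) {t r s c : ℝ} (hrs : r + T ≤ s)
    (hmix : IsStrongMixingBound (observedSigmaAlgebra X (Set.Icc 0 t))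
      (observedSigmaAlgebra X (Set.Ici (t + r))) P c) :
    IsStrongMixingBound (observedSigmaAlgebra (progressiveIncrement T X) (Set.Icc 0 t))
      (observedSigmaAlgebra (progressiveIncrement T X) (Set.Ici (t + s))) P c :=
  hmix.mono (observedSigmaAlgebra_progressiveIncrement_Icc_le X hT t)
    (observedSigmaAlgebra_progressiveIncrement_Ici_le X hT (by linarith))

end ProgressiveIncrement

/-- **Strong mixing of the process implies strong mixing of the progressive increment process.**
For `T > 0` define `X^T_t = X_t - X_{⌊t/T⌋ T}`. If `X` is strongly mixing with coefficient `α`,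
then `X^T` is strongly mixing with coefficient `α'(s) ≤ α(s - 2T)` for `s ≥ 2T`. -/
theorem strong_mixing_implies_progressive_increments_strong_mixing
    {Ω : Type*} [m0 : MeasurableSpace Ω] (P : Measure Ω) [IsProbabilityMeasure P]
    (d : ℕ) (T : ℝ) (hT : 0 < T)
    (X : ℝ → Ω → EuclideanSpace ℝ (Fin d))
    (α : ℝ → ℝ) (hα : ∀ s, 0 ≤ α s)
    (hmix : ∀ t s : ℝ, 0 ≤ t → 0 ≤ s → ∀ A B : Set Ω,
      MeasurableSet[⨆ u ∈ Set.Icc (0:ℝ) t, MeasurableSpace.comap (X u) inferInstance] A →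
      MeasurableSet[⨆ u ∈ Set.Ici (t + s), MeasurableSpace.comap (X u) inferInstance] B →
      |(P (A ∩ B)).toReal - (P A).toReal * (P B).toReal| ≤ α s) :
    ∀ t s : ℝ, 0 ≤ t → 2 * T ≤ s → ∀ A B : Set Ω,
      MeasurableSet[⨆ u ∈ Set.Icc (0:ℝ) t, MeasurableSpace.comap
        (fun ω => X u ω - X ((⌊u / T⌋ : ℝ) * T) ω) inferInstance] A →
      MeasurableSet[⨆ u ∈ Set.Ici (t + s), MeasurableSpace.comap
        (fun ω => X u ω - X ((⌊u / T⌋ : ℝ) * T) ω) inferInstance] B →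
      |(P (A ∩ B)).toReal - (P A).toReal * (P B).toReal| ≤ α (s - 2 * T) :=
  fun t s ht hs => strong_mixing_implies_progressive_increments_strong_mixing_general X hT
    (by linarith) (hmix t (s - 2 * T) ht (by linarith))
end

section
/- Let H ∈ (1/2, 1] and let u, v, s, t be real numbers with 0 ≤ u ≤ v < s ≤ t and s − v ≥ (3/2)((t − s) + (v − u)). Then (1/2)·|(s−v)^{2H} + (t−u)^{2H} − (t−v)^{2H} − (s−u)^{2H}| ≤ 3H(2H−1)·(s−v)^{2H−2}·(t−s)·(v−u). -/
/-!
With `x = s - v`, `a = t - s`, `b = v - u` and `f y = y ^ (2 * H)`, the quantity inside the absolute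
value is the mixed second difference of `f` at `x` with steps `a` and `b`. Two applications of the
mean value inequality bound it by `a * b` times the supremum of `|f''|` on `[x, ∞)`, and for `H ≤ 1`
this supremum is attained at `x`.
-/

lemma norm_second_difference_le_of_norm_hasDerivWithin_le {𝕜 E : Type*} [RCLike 𝕜]
    [NormedAddCommGroup E] [NormedSpace 𝕜 E] {f f' f'' : 𝕜 → E} {S : Set 𝕜} {C : ℝ} {x a b : 𝕜}
    (hS : Convex ℝ S) (hf : ∀ y ∈ S, HasDerivWithinAt f (f' y) S y)
    (hf' : ∀ y ∈ S, HasDerivWithinAt f' (f'' y) S y) (bound : ∀ y ∈ S, ‖f'' y‖ ≤ C)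
    (hx : x ∈ S) (hxa : x + a ∈ S) (hxb : x + b ∈ S) (hxab : x + a + b ∈ S) :
    ‖(f (x + a + b) - f (x + a)) - (f (x + b) - f x)‖ ≤ C * ‖b‖ * ‖a‖ := by
  let T : Set 𝕜 := S ∩ (· + b) ⁻¹' S
  have hT : Convex ℝ T := hS.inter (hS.translate_preimage_left b)
  have hderiv : ∀ y ∈ T, HasDerivWithinAt (fun z ↦ f (z + b) - f z) (f' (y + b) - f' y) T y := by
    rintro y ⟨hy, hyb⟩
    have hshift : HasDerivWithinAt (· + b) 1 T y := (hasDerivWithinAt_id y T).add_const b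
    have hfshift : HasDerivWithinAt (fun z ↦ f (z + b)) (f' (y + b)) T y := by
      simpa only [one_smul, Function.comp_def] using (hf (y + b) hyb).scomp y hshift fun _ hz ↦ hz.2
    exact hfshift.sub ((hf y hy).mono Set.inter_subset_left)
  have hderiv_le : ∀ y ∈ T, ‖f' (y + b) - f' y‖ ≤ C * ‖b‖ := by
    rintro y ⟨hy, hyb⟩
    simpa only [add_sub_cancel_left] using
      hS.norm_image_sub_le_of_norm_hasDerivWithin_le hf' bound hy hyb
  simpa only [add_sub_cancel_left] using
    hT.norm_image_sub_le_of_norm_hasDerivWithin_le hderiv hderiv_le ⟨hx, hxb⟩ ⟨hxa, hxab⟩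

lemma abs_rpow_second_difference_le {p x a b : ℝ} (hp : p ≤ 2) (hx : 0 < x) (ha : 0 ≤ a)
    (hb : 0 ≤ b) :
    |((x + a + b) ^ p - (x + a) ^ p) - ((x + b) ^ p - x ^ p)|
      ≤ |p * (p - 1)| * x ^ (p - 2) * b * a := by
  have hderiv : ∀ q : ℝ, ∀ y ∈ Set.Ici x,
      HasDerivWithinAt (fun z : ℝ ↦ z ^ q) (q * y ^ (q - 1)) (Set.Ici x) y := fun q y hy ↦
    (Real.hasDerivAt_rpow_const (.inl (hx.trans_le hy).ne')).hasDerivWithinAt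
  have bound : ∀ y ∈ Set.Ici x,
      ‖p * ((p - 1) * y ^ (p - 1 - 1))‖ ≤ |p * (p - 1)| * x ^ (p - 2) := by
    intro y hy
    have hpow : y ^ (p - 2) ≤ x ^ (p - 2) := Real.rpow_le_rpow_of_nonpos hx hy (by linarith)
    have hypos : 0 ≤ y ^ (p - 2) := Real.rpow_nonneg (hx.le.trans hy) _
    rw [← mul_assoc, show p - 1 - 1 = p - 2 by ring, norm_mul, Real.norm_eq_abs,
      Real.norm_of_nonneg hypos]
    gcongr
  have h := norm_second_difference_le_of_norm_hasDerivWithin_le (convex_Ici x) (hderiv p)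
    (fun y hy ↦ (hderiv (p - 1) y hy).const_mul p) bound (a := a) (b := b) Set.self_mem_Ici
    (Set.mem_Ici.2 (by linarith)) (Set.mem_Ici.2 (by linarith)) (Set.mem_Ici.2 (by linarith))
  simpa only [Real.norm_eq_abs, abs_of_nonneg ha, abs_of_nonneg hb] using h

theorem fbm_covariance_decay_general {H u v s t : ℝ} (hH : H ≤ 1) (huv : u ≤ v) (hvs : v < s)
    (hst : s ≤ t) :
    (1 / 2) * |(s - v) ^ (2 * H) + (t - u) ^ (2 * H)
        - (t - v) ^ (2 * H) - (s - u) ^ (2 * H)|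
      ≤ |H * (2 * H - 1)| * (s - v) ^ (2 * H - 2) * (t - s) * (v - u) := by
  have hdiff := abs_rpow_second_difference_le (p := 2 * H) (by linarith) (sub_pos.2 hvs)
    (sub_nonneg.2 hst) (sub_nonneg.2 huv)
  have htv : s - v + (t - s) = t - v := by ring
  have htu : t - v + (v - u) = t - u := by ring
  have hsu : s - v + (v - u) = s - u := by ring
  rw [htv, htu, hsu] at hdiff
  calc
    _ = (1 / 2) * |((t - u) ^ (2 * H) - (t - v) ^ (2 * H))
          - ((s - u) ^ (2 * H) - (s - v) ^ (2 * H))| := by ring_nf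
    _ ≤ (1 / 2) * (|2 * H * (2 * H - 1)| * (s - v) ^ (2 * H - 2) * (v - u) * (t - s)) := by
      gcongr
    _ = _ := by
      rw [mul_assoc 2 H, abs_mul 2, abs_two]
      ring

/-- **Covariance decay estimate for fractional Brownian motion (Appendix E.2.2 of the paper).**
For `H ∈ (1/2, 1]` and `0 ≤ u ≤ v < s ≤ t` with `s − v ≥ (3/2)((t−s) + (v−u))`,
`(1/2)|(s−v)^{2H} + (t−u)^{2H} − (t−v)^{2H} − (s−u)^{2H}|
  ≤ 3H(2H−1)(s−v)^{2H−2}(t−s)(v−u)`. -/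
theorem fbm_covariance_decay
    (H : ℝ) (hH1 : 1 / 2 < H) (hH2 : H ≤ 1)
    (u v s t : ℝ) (hu : 0 ≤ u) (huv : u ≤ v) (hvs : v < s) (hst : s ≤ t)
    (hgap : (3 / 2) * ((t - s) + (v - u)) ≤ s - v) :
    (1 / 2) * |(s - v) ^ (2 * H) + (t - u) ^ (2 * H)
        - (t - v) ^ (2 * H) - (s - u) ^ (2 * H)|
      ≤ 3 * H * (2 * H - 1) * (s - v) ^ (2 * H - 2) * (t - s) * (v - u) := by
  have hconst : |H * (2 * H - 1)| ≤ 3 * H * (2 * H - 1) := by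
    rw [abs_of_nonneg (mul_nonneg (by linarith) (by linarith))]
    nlinarith
  exact (fbm_covariance_decay_general hH2 huv hvs hst).trans (by gcongr)
end

section
/- Let (Ω, F, P) be a probability space and let X : ℕ → Ω → ℝ^d be a sequence of integrable random vectors that is a martingale with respect to its natural filtration F_m = σ(X_0, …, X_m). Define the lead-lag process Y : ℕ → Ω → ℝ^d × ℝ^d by Y_{2m} = (X_m, X_m) and Y_{2m+1} = (X_{m+1}, X_m) for m ∈ ℕ, and let G_{m'} = σ(Y_0, …, Y_{m'}) be the natural filtration of Y. Then the first (leading) component of Y, i.e. the process m' ↦ (first coordinate of Y_{m'}) with values in ℝ^d, is a martingale with respect to the filtration (G_{m'})_{m' ∈ ℕ}. -/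
/-! At time `n` the lead-lag process is `(X ⌈n/2⌉, X ⌊n/2⌋)`. Its lagging component has already been
observed by time `⌈n/2⌉`, and `n ↦ ⌈n/2⌉` skips no value, so observing the process up to time `n`
amounts to observing `X` up to time `⌈n/2⌉`. The leading component and the natural filtration of the
lead-lag process are thus those of `X` under one and the same monotone time change, and a monotone
time change preserves martingales. -/

open MeasureTheory

section TimeChange

variable {Ω ι κ : Type*} {m : MeasurableSpace Ω} [Preorder ι] [Preorder κ]

/-- The filtration `k ↦ ℱ (τ k)` obtained from `ℱ` by a deterministic monotone change of time `τ`,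
which may be constant on stretches of `κ`. -/
def timeChange (ℱ : Filtration ι m) (τ : κ →o ι) : Filtration κ m where
  seq k := ℱ (τ k)
  mono' _ _ hjk := ℱ.mono (τ.monotone hjk)
  le' k := ℱ.le (τ k)

theorem martingale_timeChange {E : Type*} [NormedAddCommGroup E] [NormedSpace ℝ E]
    {X : ι → Ω → E} {ℱ : Filtration ι m} {μ : Measure Ω} (hX : Martingale X ℱ μ) (τ : κ →o ι) :
    Martingale (fun k => X (τ k)) (timeChange ℱ τ) μ :=
  ⟨fun k => hX.stronglyMeasurable (τ k), fun _ _ hjk => hX.condExp_ae_eq (τ.monotone hjk)⟩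

end TimeChange

section NaturalFiltration

variable {Ω ι : Type*} {m : MeasurableSpace Ω} [Preorder ι]
  {β : ι → Type*} [∀ i, TopologicalSpace (β i)] [∀ i, TopologicalSpace.MetrizableSpace (β i)]
  [∀ i, MeasurableSpace (β i)] [∀ i, BorelSpace (β i)]
  {X : (i : ι) → Ω → β i}

theorem adapted_natural (hX : ∀ i, StronglyMeasurable (X i)) :
    Adapted (Filtration.natural X hX) X :=
  (Filtration.stronglyAdapted_natural hX).adapted

theorem natural_le_of_adapted (hX : ∀ i, StronglyMeasurable (X i)) {ℱ : Filtration ι m}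
    (hadapted : Adapted ℱ X) : Filtration.natural X hX ≤ ℱ :=
  fun _ => iSup₂_le fun _ hji => (hadapted.measurable_le hji).comap_le

theorem natural_timeChange (hX : ∀ i, StronglyMeasurable (X i)) {κ : Type*} [Preorder κ]
    {τ : κ →o ι} (hτ : ∀ k, Set.SurjOn τ (Set.Iic k) (Set.Iic (τ k))) :
    Filtration.natural (fun k => X (τ k)) (fun k => hX (τ k)) =
      timeChange (Filtration.natural X hX) τ := by
  have hXτ : ∀ k, StronglyMeasurable (X (τ k)) := fun k => hX (τ k)
  refine le_antisymm (natural_le_of_adapted hXτ fun k => adapted_natural hX (τ k)) fun k => ?_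
  refine iSup₂_le fun i hi => ?_
  obtain ⟨j, hjk, rfl⟩ := hτ k hi
  exact ((adapted_natural hXτ).measurable_le hjk).comap_le

theorem natural_prodMk_of_adapted {γ : ι → Type*} [∀ i, TopologicalSpace (γ i)]
    [∀ i, TopologicalSpace.MetrizableSpace (γ i)] [∀ i, MeasurableSpace (γ i)]
    [∀ i, BorelSpace (β i × γ i)] {Z : (i : ι) → Ω → γ i}
    (hX : ∀ i, StronglyMeasurable (X i)) (hXZ : ∀ i, StronglyMeasurable fun ω => (X i ω, Z i ω))
    (hZ : Adapted (Filtration.natural X hX) Z) :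
    Filtration.natural (fun i ω => (X i ω, Z i ω)) hXZ = Filtration.natural X hX := by
  apply le_antisymm
  · exact natural_le_of_adapted hXZ fun i => (adapted_natural hX i).prodMk (hZ i)
  · exact natural_le_of_adapted hX fun i => measurable_fst.comp (adapted_natural hXZ i)

end NaturalFiltration

section LeadLag

/-- The time `⌈n/2⌉` at which the leading component of the lead-lag transform reads the original
sequence; the lagging component reads it at time `⌊n/2⌋ = n / 2`. -/
def leadTime : ℕ →o ℕ where
  toFun n := (n + 1) / 2
  monotone' _ _ hmn := Nat.div_le_div_right (Nat.succ_le_succ hmn)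

theorem leadTime_two_mul (m : ℕ) : leadTime (2 * m) = m := by
  change (2 * m + 1) / 2 = m
  lia

theorem leadTime_two_mul_add_one (m : ℕ) : leadTime (2 * m + 1) = m + 1 := by
  change (2 * m + 1 + 1) / 2 = m + 1
  lia

theorem div_two_le_leadTime (n : ℕ) : n / 2 ≤ leadTime n :=
  Nat.div_le_div_right n.le_succ

theorem leadTime_surjOn_Iic (n : ℕ) : Set.SurjOn leadTime (Set.Iic n) (Set.Iic (leadTime n)) :=
  surjOn_Iic_of_monotone_surjective leadTime.monotone (fun m => ⟨2 * m, leadTime_two_mul m⟩) n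

/-- The lead-lag transform of a sequence of functions, as a single formula in place of the
case distinction between even times `(X m, X m)` and odd times `(X (m + 1), X m)`. -/
def leadLag {Ω E : Type*} (X : ℕ → Ω → E) (n : ℕ) (ω : Ω) : E × E :=
  (X (leadTime n) ω, X (n / 2) ω)

theorem eq_leadLag {Ω E : Type*} {X : ℕ → Ω → E} {Y : ℕ → Ω → E × E}
    (heven : ∀ m ω, Y (2 * m) ω = (X m ω, X m ω))
    (hodd : ∀ m ω, Y (2 * m + 1) ω = (X (m + 1) ω, X m ω)) : Y = leadLag X := by
  funext n ω
  obtain ⟨m, rfl | rfl⟩ := n.even_or_odd'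
  · rw [heven, leadLag, leadTime_two_mul, Nat.mul_div_cancel_left m two_pos]
  · rw [hodd, leadLag, leadTime_two_mul_add_one, Nat.mul_add_div two_pos,
      Nat.div_eq_of_lt one_lt_two, add_zero]

theorem natural_leadLag {Ω E : Type*} {m : MeasurableSpace Ω} [TopologicalSpace E]
    [TopologicalSpace.MetrizableSpace E] [SecondCountableTopology E] [MeasurableSpace E]
    [BorelSpace E] {X : ℕ → Ω → E} (hX : ∀ n, StronglyMeasurable (X n))
    (hY : ∀ n, StronglyMeasurable (leadLag X n)) :
    Filtration.natural (leadLag X) hY = timeChange (Filtration.natural X hX) leadTime := by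
  have hlead := natural_timeChange hX leadTime_surjOn_Iic
  have hlag : Adapted (timeChange (Filtration.natural X hX) leadTime) fun n => X (n / 2) :=
    fun n => (adapted_natural hX).measurable_le (div_two_le_leadTime n)
  rw [← hlead] at hlag ⊢
  exact natural_prodMk_of_adapted (fun n => hX (leadTime n)) hY hlag

end LeadLag

theorem leadLag_leading_component_martingale_general
    {Ω E : Type*} {m0 : MeasurableSpace Ω} (P : Measure Ω)
    [NormedAddCommGroup E] [NormedSpace ℝ E] [CompleteSpace E] [SecondCountableTopology E]
    [MeasurableSpace E] [BorelSpace E] (X : ℕ → Ω → E)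
    (hXmeas : ∀ n, StronglyMeasurable (X n))
    [SigmaFiniteFiltration P (Filtration.natural X hXmeas)]
    (hX : Martingale X (Filtration.natural X hXmeas) P)
    (Y : ℕ → Ω → E × E) (hYmeas : ∀ n, StronglyMeasurable (Y n))
    (hYeven : ∀ (m : ℕ) (ω : Ω), Y (2 * m) ω = (X m ω, X m ω))
    (hYodd : ∀ (m : ℕ) (ω : Ω), Y (2 * m + 1) ω = (X (m + 1) ω, X m ω)) :
    Martingale (fun n ω => (Y n ω).1) (Filtration.natural Y hYmeas) P := by
  obtain rfl : Y = leadLag X := eq_leadLag hYeven hYodd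
  rw [natural_leadLag hXmeas hYmeas]
  exact martingale_timeChange hX leadTime

/-- **The leading component of the lead-lag transform of a martingale is a martingale
(Appendix F.1 of the paper).** Let `X : ℕ → Ω → ℝ^d` be a martingale with respect to its natural
filtration, and let `Y` be its lead-lag transform, `Y_{2m} = (X_m, X_m)`,
`Y_{2m+1} = (X_{m+1}, X_m)`. Then the first (leading) component of `Y` is a martingale with
respect to the natural filtration of `Y`. -/
theorem leadLag_leading_component_martingale
    {Ω : Type*} [m0 : MeasurableSpace Ω] (P : Measure Ω) [IsProbabilityMeasure P]
    (d : ℕ) (X : ℕ → Ω → EuclideanSpace ℝ (Fin d))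
    (hXmeas : ∀ n, StronglyMeasurable (X n))
    (hX : Martingale X (Filtration.natural X hXmeas) P)
    (Y : ℕ → Ω → EuclideanSpace ℝ (Fin d) × EuclideanSpace ℝ (Fin d))
    (hYmeas : ∀ n, StronglyMeasurable (Y n))
    (hYeven : ∀ (m : ℕ) (ω : Ω), Y (2 * m) ω = (X m ω, X m ω))
    (hYodd : ∀ (m : ℕ) (ω : Ω), Y (2 * m + 1) ω = (X (m + 1) ω, X m ω)) :
    Martingale (fun m' ω => (Y m' ω).1) (Filtration.natural Y hYmeas) P :=
  leadLag_leading_component_martingale_general P X hXmeas hX Y hYmeas hYeven hYodd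
end
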